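/- arXiv:1504.00538 — 4 statements merged into one kernel-verified Lean document; each statement's English description precedes it below -/
import Mathlib

section
/- Let X ∈ O_{m×r} and Y ∈ ℝ^{m×p} with 1 ≤ r ≤ m. Let Z be any minimizer of ‖Z − X‖_F² over Z ∈ H_{Y,r}. Then ((σ_r(Y)² − σ_{r+1}(Y)²)/2)·‖Z − X‖_F² ≤ ‖ZᵀY‖_F² − ‖XᵀY‖_F². -/
open Matrix BigOperators Filter

/-- The squared Frobenius norm of a real matrix. -/
def froSq {ι κ : Type*} [Fintype ι] [Fintype κ] (M : Matrix ι κ ℝ) : ℝ :=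
  ∑ i, ∑ j, (M i j) ^ 2

/-- The Frobenius norm of a real matrix. -/
noncomputable def fro {ι κ : Type*} [Fintype ι] [Fintype κ] (M : Matrix ι κ ℝ) : ℝ :=
  Real.sqrt (froSq M)

/-- The eigenvalues of `Y * Yᴴ`, sorted in descending order. -/
noncomputable def eigList {m : ℕ} {κ : Type*} [Fintype κ] (Y : Matrix (Fin m) κ ℝ) : List ℝ :=
  ((((Finset.univ : Finset (Fin m)).val.map
      (fun j => (Matrix.isHermitian_mul_conjTranspose_self Y).eigenvalues j)).sort (· ≤ ·)).reverse)

/-- The `i`-th largest singular value (1-indexed) of a real matrix, with the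
convention that it is `0` beyond the smaller matrix dimension. -/
noncomputable def sval {m : ℕ} {κ : Type*} [Fintype κ] (Y : Matrix (Fin m) κ ℝ) (i : ℕ) : ℝ :=
  Real.sqrt ((eigList Y).getD (i - 1) 0)

/-- The set of `m × r` real matrices with orthonormal columns. -/
def Stiefel (m r : ℕ) : Set (Matrix (Fin m) (Fin r) ℝ) :=
  {Z | Zᵀ * Z = 1}

/-- `H_{Y,r}`: the set of maximizers of `‖Zᵀ Y‖_F²` over the Stiefel manifold. -/
def HSet {m p : ℕ} (Y : Matrix (Fin m) (Fin p) ℝ) (r : ℕ) : Set (Matrix (Fin m) (Fin r) ℝ) :=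
  {Z | Z ∈ Stiefel m r ∧ ∀ W ∈ Stiefel m r, froSq (Wᵀ * Y) ≤ froSq (Zᵀ * Y)}

/-- The nuclear norm: the sum of all singular values. -/
noncomputable def nuclearNorm {a b : ℕ} (M : Matrix (Fin a) (Fin b) ℝ) : ℝ :=
  ∑ i ∈ Finset.range (min a b), sval M (i + 1)

/-- `U` maximizes `‖Uᵀ X‖_*` over `H_{Y,r}`. -/
def NucMax {m p r : ℕ} (Y : Matrix (Fin m) (Fin p) ℝ) (X U : Matrix (Fin m) (Fin r) ℝ) : Prop :=
  U ∈ HSet Y r ∧ ∀ V ∈ HSet Y r, nuclearNorm (Vᵀ * X) ≤ nuclearNorm (Uᵀ * X)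

/-- The uniqueness conditions for `(Y, r)` at `X`. -/
def UniqCond {m p : ℕ} (Y : Matrix (Fin m) (Fin p) ℝ) (r : ℕ)
    (X : Matrix (Fin m) (Fin r) ℝ) : Prop :=
  (∀ U, NucMax Y X U → (Uᵀ * X).det ≠ 0) ∧
  (∀ U₁ U₂, NucMax Y X U₁ → NucMax Y X U₂ → U₁ * U₁ᵀ = U₂ * U₂ᵀ)

/-- `Z` is a minimizer of `‖Z − X‖_F²` over `H_{Y,r}`. -/
def IsProj {m p r : ℕ} (Y : Matrix (Fin m) (Fin p) ℝ) (X Z : Matrix (Fin m) (Fin r) ℝ) : Prop :=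
  Z ∈ HSet Y r ∧ ∀ W ∈ HSet Y r, froSq (Z - X) ≤ froSq (W - X)

/-- The trace inner product of two matrices. -/
noncomputable def tinner {a b : ℕ} (A B : Matrix (Fin a) (Fin b) ℝ) : ℝ :=
  Matrix.trace (Aᵀ * B)

theorem froSq_eq {ι κ : Type*} [Fintype ι] [Fintype κ] (M : Matrix ι κ ℝ) : froSq M = (Mᵀ * M).trace := by
  simp only [froSq, Matrix.trace, Matrix.diag, Matrix.mul_apply, Matrix.transpose_apply]
  rw [Finset.sum_comm]; simp [sq]
theorem froSq_eq' {ι κ : Type*} [Fintype ι] [Fintype κ] (M : Matrix ι κ ℝ) : froSq M = (M * Mᵀ).trace := by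
  rw [froSq_eq, Matrix.trace_mul_comm]

theorem stiefel_contr {ι κ : Type*} [Fintype ι] [Fintype κ] [DecidableEq κ] (X : Matrix ι κ ℝ)
   (hX : Xᵀ * X = 1) (v : ι → ℝ) : (Xᵀ *ᵥ v) ⬝ᵥ (Xᵀ *ᵥ v) ≤ v ⬝ᵥ v := by
  have h : 0 ≤ (v - X *ᵥ (Xᵀ *ᵥ v)) ⬝ᵥ (v - X *ᵥ (Xᵀ *ᵥ v)) := by
    simp only [dotProduct]; exact Finset.sum_nonneg fun i _ => mul_self_nonneg _
  have h1 : v ⬝ᵥ (X *ᵥ (Xᵀ *ᵥ v)) = (Xᵀ *ᵥ v) ⬝ᵥ (Xᵀ *ᵥ v) := by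
    rw [Matrix.dotProduct_mulVec, ← Matrix.mulVec_transpose]
  have h2 : (X *ᵥ (Xᵀ *ᵥ v)) ⬝ᵥ (X *ᵥ (Xᵀ *ᵥ v)) = (Xᵀ *ᵥ v) ⬝ᵥ (Xᵀ *ᵥ v) := by
    rw [Matrix.dotProduct_mulVec, ← Matrix.mulVec_transpose, Matrix.mulVec_mulVec, hX, Matrix.one_mulVec]
  rw [sub_dotProduct, dotProduct_sub, dotProduct_sub, dotProduct_comm (X *ᵥ (Xᵀ *ᵥ v)) v, h1, h2] at h
  linarith

theorem stiefel_row_le {ι κ : Type*} [Fintype ι] [DecidableEq ι] [Fintype κ] [DecidableEq κ] (X : Matrix ι κ ℝ)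
   (hX : Xᵀ * X = 1) (i : ι) : ∑ k, X i k ^ 2 ≤ 1 := by
  have := stiefel_contr X hX (Pi.single i 1)
  simp only [Matrix.mulVec_single_one] at this
  simpa [dotProduct, Matrix.col, sq, Pi.single_apply] using this

theorem spectral {m p : ℕ} (Y : Matrix (Fin m) (Fin p) ℝ) : ∃ (P : Matrix (Fin m) (Fin m) ℝ) (μ : Fin m → ℝ),
    Pᵀ * P = 1 ∧ Pᵀ * (Y * Yᵀ) * P = diagonal μ ∧ Antitone μ ∧ (∀ i, 0 ≤ μ i) ∧
    eigList Y = List.ofFn μ := by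
  set hA := Matrix.isHermitian_mul_conjTranspose_self Y with hAd
  let e := Tuple.sort (fun i => - hA.eigenvalues i)
  let E : Matrix (Fin m) (Fin m) ℝ := hA.eigenvectorUnitary
  have hE : Eᵀ * E = 1 := by
    have := Unitary.coe_star_mul_self hA.eigenvectorUnitary
    simpa [Matrix.star_eq_conjTranspose, E] using this
  have hD : Eᵀ * (Y * Yᵀ) * E = diagonal hA.eigenvalues := by
    have := hA.conjStarAlgAut_star_eigenvectorUnitary
    rw [Unitary.conjStarAlgAut_apply] at this
    simpa [Matrix.star_eq_conjTranspose, Function.comp_def, E] using this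
  have hanti : Antitone (hA.eigenvalues ∘ e) := by
    have := Tuple.monotone_sort (fun i => - hA.eigenvalues i)
    intro i j hij
    have := this hij
    simp only [Function.comp] at this ⊢
    linarith
  refine ⟨E.submatrix id e, hA.eigenvalues ∘ e, ?_, ?_, hanti, ?_, ?_⟩
  · have : (E.submatrix id e)ᵀ * (E.submatrix id e) = (Eᵀ * E).submatrix e e := by
      ext i j; simp [Matrix.mul_apply]
    rw [this, hE]; simp
  · have : (E.submatrix id e)ᵀ * (Y * Yᵀ) * (E.submatrix id e) = (Eᵀ * (Y * Yᵀ) * E).submatrix e e := by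
      ext i j; simp [Matrix.mul_apply]
    rw [this, hD, Matrix.submatrix_diagonal_equiv]
  · intro i
    exact (Matrix.posSemidef_self_mul_conjTranspose Y).eigenvalues_nonneg _
  · rw [eigList]
    refine List.Perm.eq_of_sortedGE ?_ hanti.sortedGE_ofFn ?_
    · rw [List.sortedGE_reverse]
      exact (Multiset.pairwise_sort _ _).sortedLE
    · refine (List.reverse_perm _).trans ?_
      rw [← Multiset.coe_eq_coe, Multiset.sort_eq, Fin.univ_val_map, Multiset.coe_eq_coe]
      exact (e.ofFn_comp_perm _).symm

theorem stiefel_mul {ι κ l : Type*} [Fintype ι] [Fintype κ] [Fintype l] [DecidableEq κ] [DecidableEq l]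
    {A : Matrix ι κ ℝ} {B : Matrix κ l ℝ} (hA : Aᵀ * A = 1) (hB : Bᵀ * B = 1) :
    (A * B)ᵀ * (A * B) = 1 := by
  rw [Matrix.transpose_mul, Matrix.mul_assoc, ← Matrix.mul_assoc Aᵀ, hA, Matrix.one_mul, hB]

theorem svd_part {r : ℕ} (N : Matrix (Fin r) (Fin r) ℝ) (d : Fin r → ℝ) (h : Nᵀ * N = diagonal d)
    (hd1 : ∀ i, d i ≤ 1) : ∃ W : Matrix (Fin r) (Fin r) ℝ, Wᵀ * W = 1 ∧ froSq N ≤ (Wᵀ * N).trace := by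
  have hij : ∀ i j, ∑ k, N k i * N k j = diagonal d i j := by
    intro i j; rw [← h]; simp [Matrix.mul_apply]
  have hd0 : ∀ i, 0 ≤ d i := by
    intro i; have := hij i i; simp only [diagonal_apply_eq] at this
    rw [← this]; exact Finset.sum_nonneg fun k _ => mul_self_nonneg _
  let v : Fin r → EuclideanSpace ℝ (Fin r) := fun i => WithLp.toLp 2 (fun k => (√(d i))⁻¹ * N k i)
  let s : Set (Fin r) := {i | d i ≠ 0}
  have hv : Orthonormal ℝ (s.domRestrict v) := by
    rw [orthonormal_iff_ite]
    rintro ⟨i, hi⟩ ⟨j, hj⟩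
    have : inner ℝ (v i) (v j) = (√(d i))⁻¹ * (√(d j))⁻¹ * diagonal d i j := by
      rw [← hij, Finset.mul_sum]
      simp only [v, PiLp.inner_apply, RCLike.inner_apply, conj_trivial]
      exact Finset.sum_congr rfl fun k _ => by ring
    change inner ℝ (v i) (v j) = _
    rw [this]
    by_cases hh : i = j
    · subst hh
      have h1 : √(d i) * √(d i) = d i := Real.mul_self_sqrt (hd0 i)
      have h2 : √(d i) ≠ 0 := fun h0 => hi (by rw [← h1, h0, zero_mul])
      simp only [diagonal_apply_eq, if_true]
      nth_rw 3 [← h1]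
      field_simp
    · simp [hh]
  obtain ⟨b, hb⟩ := hv.exists_orthonormalBasis_extension_of_card_eq (by simp)
  refine ⟨Matrix.of fun k i => b i k, ?_, ?_⟩
  · ext i j
    have := orthonormal_iff_ite.1 b.orthonormal i j
    simp only [PiLp.inner_apply, RCLike.inner_apply, conj_trivial] at this
    simp only [Matrix.mul_apply, Matrix.transpose_apply, Matrix.of_apply, Matrix.one_apply]
    rw [← this]
    exact Finset.sum_congr rfl fun k _ => by ring
  · rw [froSq_eq, h, Matrix.trace_diagonal]
    simp only [Matrix.trace, Matrix.diag]
    refine Finset.sum_le_sum fun i _ => ?_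
    simp only [Matrix.mul_apply, Matrix.transpose_apply, Matrix.of_apply]
    by_cases hi : d i = 0
    · have h0 : ∀ k, N k i = 0 := by
        have := hij i i
        rw [diagonal_apply_eq, hi, Finset.sum_eq_zero_iff_of_nonneg (fun k _ => mul_self_nonneg _)] at this
        intro k; simpa using this k (Finset.mem_univ _)
      simp [hi, h0]
    · rw [hb i hi]
      have h1 : √(d i) * √(d i) = d i := Real.mul_self_sqrt (hd0 i)
      have h2 : √(d i) ≠ 0 := fun h0 => hi (by rw [← h1, h0, zero_mul])
      have h3 : ∑ k, (v i) k * N k i = √(d i) := by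
        have : ∑ k, (v i) k * N k i = (√(d i))⁻¹ * ∑ k, N k i * N k i := by
          rw [Finset.mul_sum]; exact Finset.sum_congr rfl fun k _ => by simp [v]; ring
        rw [this, hij, diagonal_apply_eq]
        nth_rw 2 [← h1]
        field_simp
      rw [h3]
      have : √(d i) ≤ 1 := Real.sqrt_le_one.2 (hd1 i)
      nlinarith [Real.sqrt_nonneg (d i)]

theorem exists_rot {m r : ℕ} (U X : Matrix (Fin m) (Fin r) ℝ) (hU : Uᵀ * U = 1) (hX : Xᵀ * X = 1) :
    ∃ Q : Matrix (Fin r) (Fin r) ℝ, Qᵀ * Q = 1 ∧ froSq (Uᵀ * X) ≤ ((U * Q)ᵀ * X).trace := by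
  obtain ⟨P, d, hP, hD, -, -, -⟩ := spectral ((Uᵀ * X)ᵀ)
  have hP' : P * Pᵀ = 1 := mul_eq_one_comm.1 hP
  have hN : (Uᵀ * (X * P))ᵀ * (Uᵀ * (X * P)) = diagonal d := by
    rw [← hD]; simp only [Matrix.transpose_mul, Matrix.transpose_transpose, Matrix.mul_assoc]
  obtain ⟨W, hW, hW2⟩ := svd_part _ d hN (by
    intro i
    have h1 := stiefel_contr U hU (fun k => (X * P) k i)
    have h2 := congrFun (congrFun (stiefel_mul hX hP) i) i
    have h3 := congrFun (congrFun hN i) i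
    rw [diagonal_apply_eq] at h3
    rw [Matrix.mul_apply] at h2 h3
    rw [← h3]
    rw [Matrix.one_apply_eq] at h2
    rw [← h2]
    exact h1)
  refine ⟨W * Pᵀ, stiefel_mul hW (by simpa using hP'), ?_⟩
  have e1 : ((U * (W * Pᵀ))ᵀ * X).trace = (Wᵀ * (Uᵀ * (X * P))).trace := by
    simp only [Matrix.transpose_mul, Matrix.transpose_transpose, Matrix.mul_assoc]
    rw [Matrix.trace_mul_comm]; simp only [Matrix.mul_assoc]
  rw [e1]
  refine le_trans (le_of_eq ?_) hW2
  rw [froSq_eq', froSq_eq']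
  congr 1
  simp only [Matrix.transpose_mul, Matrix.transpose_transpose, Matrix.mul_assoc]
  rw [← Matrix.mul_assoc P, hP', Matrix.one_mul]

theorem weighted {m r : ℕ} (hrm : r ≤ m) (μ c : Fin m → ℝ) (a b : ℝ) (ha : ∀ i : Fin m, i.1 < r → a ≤ μ i)
    (hb : ∀ i : Fin m, r ≤ i.1 → μ i ≤ b) (hc0 : ∀ i, 0 ≤ c i) (hc1 : ∀ i, c i ≤ 1) (hc : ∑ i, c i = r) :
    (a - b) * (r - ∑ i : Fin r, c (Fin.castLE hrm i)) ≤ 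
      ∑ i : Fin r, μ (Fin.castLE hrm i) - ∑ i, μ i * c i := by
  obtain ⟨k, rfl⟩ := Nat.exists_eq_add_of_le hrm
  have hcast : ∀ i : Fin r, Fin.castLE hrm i = Fin.castAdd k i := fun i => rfl
  rw [Fin.sum_univ_add] at hc ⊢
  simp only [hcast]
  have h1 : a * ∑ i : Fin r, (1 - c (Fin.castAdd k i)) ≤ ∑ i : Fin r, μ (Fin.castAdd k i) * (1 - c (Fin.castAdd k i)) := by
    rw [Finset.mul_sum]
    exact Finset.sum_le_sum fun i _ => mul_le_mul_of_nonneg_right (ha _ (by simp)) (by linarith [hc1 (Fin.castAdd k i)])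
  have h2 : ∑ i : Fin k, μ (Fin.natAdd r i) * c (Fin.natAdd r i) ≤ b * ∑ i : Fin k, c (Fin.natAdd r i) := by
    rw [Finset.mul_sum]
    exact Finset.sum_le_sum fun i _ => mul_le_mul_of_nonneg_right (hb _ (by simp)) (hc0 _)
  have h3 : ∑ i : Fin k, c (Fin.natAdd r i) = r - ∑ i : Fin r, c (Fin.castAdd k i) := by linarith
  rw [h3] at h2
  simp only [mul_sub, mul_one, Finset.sum_sub_distrib, Finset.sum_const, Finset.card_univ, Fintype.card_fin, nsmul_eq_mul] at h1
  linarith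

theorem key {m p r : ℕ} (hr1 : 1 ≤ r) (hrm : r ≤ m) (Y : Matrix (Fin m) (Fin p) ℝ) :
    ∃ U : Matrix (Fin m) (Fin r) ℝ, Uᵀ * U = 1 ∧ (sval Y (r + 1)) ^ 2 ≤ (sval Y r) ^ 2 ∧
    ∀ X : Matrix (Fin m) (Fin r) ℝ, Xᵀ * X = 1 → 
      ((sval Y r) ^ 2 - (sval Y (r + 1)) ^ 2) * (r - froSq (Uᵀ * X)) ≤ froSq (Uᵀ * Y) - froSq (Xᵀ * Y) := by
  obtain ⟨P, μ, hP, hD, hanti, hpos, hl⟩ := spectral Y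
  have hP' : P * Pᵀ = 1 := mul_eq_one_comm.1 hP
  have hs : ∀ n, (sval Y (n + 1)) ^ 2 = if h : n < m then μ ⟨n, h⟩ else 0 := by
    intro n
    rw [sval, hl, Real.sq_sqrt]
    · simp [List.getD_eq_getElem?_getD, List.getElem?_ofFn]
      split_ifs <;> simp
    · simp [List.getD_eq_getElem?_getD, List.getElem?_ofFn]
      split_ifs <;> simp [hpos]
  have ha : ∀ i : Fin m, i.1 < r → (sval Y r) ^ 2 ≤ μ i := by
    intro i hi
    obtain ⟨q, rfl⟩ := Nat.exists_eq_add_of_le' hr1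
    rw [hs, dif_pos (by omega)]
    exact hanti (by rw [Fin.le_def]; simp; omega)
  have hb : ∀ i : Fin m, r ≤ i.1 → μ i ≤ (sval Y (r + 1)) ^ 2 := by
    intro i hi
    rw [hs, dif_pos (by omega)]
    exact hanti (by rw [Fin.le_def]; simpa using hi)
  have hgen : ∀ X : Matrix (Fin m) (Fin r) ℝ, froSq (Xᵀ * Y) = ∑ i, μ i * ∑ k, (Pᵀ * X) i k ^ 2 := by
    intro X
    have hX : X = P * (Pᵀ * X) := by rw [← Matrix.mul_assoc, hP', Matrix.one_mul]
    have : (Xᵀ * Y) * (Xᵀ * Y)ᵀ = (Pᵀ * X)ᵀ * (diagonal μ * (Pᵀ * X)) := by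
      rw [← hD]
      conv_lhs => rw [hX]
      simp only [Matrix.transpose_mul, Matrix.transpose_transpose, Matrix.mul_assoc]
    rw [froSq_eq', this]
    simp only [Matrix.trace, Matrix.diag]
    conv_lhs => 
      enter [2, k]
      rw [Matrix.mul_apply]
    rw [Finset.sum_comm]
    refine Finset.sum_congr rfl fun i _ => ?_
    rw [Finset.mul_sum]
    refine Finset.sum_congr rfl fun k _ => ?_
    rw [Matrix.diagonal_mul, Matrix.transpose_apply]; ring
  let J : Matrix (Fin m) (Fin r) ℝ := (1 : Matrix (Fin m) (Fin m) ℝ).submatrix id (Fin.castLE hrm)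
  have hJ : Jᵀ * J = 1 := by
    ext i j
    simp [J, Matrix.mul_apply, Matrix.one_apply]
  refine ⟨P * J, stiefel_mul hP hJ, ?_, ?_⟩
  · rw [hs]
    split_ifs with h
    · exact (hanti (by rw [Fin.le_def]; simp) : μ ⟨r, h⟩ ≤ μ ⟨r - 1, by omega⟩).trans (by
        obtain ⟨q, rfl⟩ := Nat.exists_eq_add_of_le' hr1
        rw [hs, dif_pos (by omega)]; simp)
    · positivity
  · intro X hX
    have hG : (Pᵀ * X)ᵀ * (Pᵀ * X) = 1 := stiefel_mul (by simpa using hP') hX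
    have hsum : ∑ i, ∑ k, (Pᵀ * X) i k ^ 2 = r := by
      have := froSq_eq (Pᵀ * X)
      rw [hG] at this
      simpa [froSq] using this
    have hw := weighted hrm μ (fun i => ∑ k, (Pᵀ * X) i k ^ 2) _ _ ha hb
      (fun i => Finset.sum_nonneg fun k _ => sq_nonneg _) (stiefel_row_le _ hG) hsum
    have e1 : froSq ((P * J)ᵀ * X) = ∑ i : Fin r, ∑ k, (Pᵀ * X) (Fin.castLE hrm i) k ^ 2 := by
      rw [Matrix.transpose_mul, Matrix.mul_assoc]
      have : Jᵀ * (Pᵀ * X) = (Pᵀ * X).submatrix (Fin.castLE hrm) id := by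
        ext i k
        rw [Matrix.mul_apply]
        simp [J, Matrix.one_apply]
      rw [this]; rfl
    have e2 : froSq ((P * J)ᵀ * Y) = ∑ i : Fin r, μ (Fin.castLE hrm i) := by
      rw [hgen, ← Matrix.mul_assoc, hP, Matrix.one_mul]
      simp only [Finset.mul_sum]
      rw [Finset.sum_comm]
      simp [J, Matrix.one_apply]
    rw [e1, e2, hgen X]
    exact hw

/-- Any minimizer `Z` of `‖Z − X‖_F²` over `H_{Y,r}` satisfies
`((σ_r(Y)² − σ_{r+1}(Y)²)/2) ‖Z − X‖_F² ≤ ‖Zᵀ Y‖_F² − ‖Xᵀ Y‖_F²`. -/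
theorem stmt1 {m p r : ℕ} (hr1 : 1 ≤ r) (hrm : r ≤ m)
    (X : Matrix (Fin m) (Fin r) ℝ) (hX : X ∈ Stiefel m r)
    (Y : Matrix (Fin m) (Fin p) ℝ)
    (Z : Matrix (Fin m) (Fin r) ℝ) (hZ : IsProj Y X Z) :
    ((sval Y r) ^ 2 - (sval Y (r + 1)) ^ 2) / 2 * froSq (Z - X) ≤
      froSq (Zᵀ * Y) - froSq (Xᵀ * Y) := by
  obtain ⟨U, hU, hgap, hUX⟩ := key hr1 hrm Y
  have hX' : Xᵀ * X = 1 := hX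
  obtain ⟨⟨hZs, hZmax⟩, hZmin⟩ := hZ
  have hmaxU : ∀ W ∈ Stiefel m r, froSq (Wᵀ * Y) ≤ froSq (Uᵀ * Y) := by
    intro W hW
    have h1 := hUX W hW
    have h2 : froSq (Uᵀ * W) ≤ r := by
      have hWW : Wᵀ * W = 1 := hW
      have e : froSq (Uᵀ * W) = ∑ k, ((Uᵀ *ᵥ (fun i => W i k)) ⬝ᵥ (Uᵀ *ᵥ (fun i => W i k))) := by
        rw [froSq, Finset.sum_comm]
        refine Finset.sum_congr rfl fun k _ => ?_
        simp only [dotProduct, sq]; rfl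
      have e2 : ∑ k, ((fun i => W i k) ⬝ᵥ (fun i => W i k)) = (r : ℝ) := by
        have : (Wᵀ * W).trace = (r : ℝ) := by rw [hWW]; simp
        rw [← this]; rfl
      rw [e, ← e2]
      exact Finset.sum_le_sum fun k _ => stiefel_contr U hU _
    nlinarith [mul_nonneg (sub_nonneg.2 hgap) (sub_nonneg.2 h2)]
  obtain ⟨Q, hQ, hQX⟩ := exists_rot U X hU hX'
  have hQ' : Q * Qᵀ = 1 := mul_eq_one_comm.1 hQ
  have hUQ : (U * Q)ᵀ * (U * Q) = 1 := stiefel_mul hU hQ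
  have hfUQ : froSq ((U * Q)ᵀ * Y) = froSq (Uᵀ * Y) := by
    rw [froSq_eq, froSq_eq]
    congr 1
    simp only [Matrix.transpose_mul, Matrix.transpose_transpose, Matrix.mul_assoc]
    rw [← Matrix.mul_assoc Q, hQ', Matrix.one_mul]
  have hmin := hZmin (U * Q) ⟨hUQ, fun W hW => by rw [hfUQ]; exact hmaxU W hW⟩
  have hexp : froSq (U * Q - X) = 2 * r - 2 * ((U * Q)ᵀ * X).trace := by
    rw [froSq_eq, Matrix.transpose_sub, Matrix.sub_mul, Matrix.mul_sub, Matrix.mul_sub, hUQ, hX']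
    have : (Xᵀ * (U * Q)).trace = ((U * Q)ᵀ * X).trace := by
      rw [← Matrix.trace_transpose]; simp [Matrix.mul_assoc]
    simp only [Matrix.trace_sub, this, Matrix.trace_one, Fintype.card_fin]
    ring
  have h1 := hUX X hX'
  have h2 := hZmax U hU
  have h3 : froSq (Z - X) / 2 ≤ r - froSq (Uᵀ * X) := by linarith
  have h4 := mul_le_mul_of_nonneg_left h3 (sub_nonneg.2 hgap)
  linarith
end

section
/- Let X ∈ O_{m×r} and Y ∈ ℝ^{m×p} with 1 ≤ r ≤ m. If X satisfies the uniqueness conditions for (Y,r), then the problem of minimizing ‖Z − X‖_F² over Z ∈ H_{Y,r} has a unique solution. -/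
open Matrix BigOperators Filter

theorem aux_nuc {r : ℕ} (M : Matrix (Fin r) (Fin r) ℝ) :
    nuclearNorm M =
      ∑ i, Real.sqrt ((Matrix.isHermitian_mul_conjTranspose_self M).eigenvalues i) := by
  have hlen : (eigList M).length = r := by simp [eigList]
  have hgen : ∀ l : List ℝ, ∑ i ∈ Finset.range l.length, Real.sqrt (l.getD i 0)
      = (l.map Real.sqrt).sum := by
    intro l
    induction l with
    | nil => simp
    | cons a t ih =>
      rw [List.length_cons, Finset.sum_range_succ']
      simp only [List.getD_cons_succ, List.getD_cons_zero, List.map_cons, List.sum_cons]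
      rw [ih, add_comm]
  have h1 : nuclearNorm M = ((eigList M).map Real.sqrt).sum := by
    rw [← hgen, hlen]
    simp [nuclearNorm, sval]
  rw [h1, ← Multiset.sum_coe, ← Multiset.map_coe]
  unfold eigList
  rw [Multiset.coe_reverse, Multiset.sort_eq, Multiset.map_map]
  rfl

theorem aux_svd {r : ℕ} (M : Matrix (Fin r) (Fin r) ℝ) :
    ∃ (V W : Matrix (Fin r) (Fin r) ℝ) (d : Fin r → ℝ), Vᵀ * V = 1 ∧ Wᵀ * W = 1 ∧
      (∀ i, 0 ≤ d i) ∧ M = V * diagonal d * Wᵀ ∧ nuclearNorm M = ∑ i, d i := by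
  set hA := Matrix.isHermitian_mul_conjTranspose_self M with hAdef
  set d : Fin r → ℝ := fun i => Real.sqrt (hA.eigenvalues i) with hd
  have hpos : ∀ i, 0 ≤ hA.eigenvalues i :=
    (Matrix.posSemidef_self_mul_conjTranspose M).eigenvalues_nonneg
  set V : Matrix (Fin r) (Fin r) ℝ := (hA.eigenvectorUnitary : Matrix (Fin r) (Fin r) ℝ) with hV
  have hVV : Vᵀ * V = 1 := by
    have := Unitary.coe_star_mul_self hA.eigenvectorUnitary
    rwa [Matrix.star_eq_conjTranspose, conjTranspose_eq_transpose_of_trivial] at this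
  have hVV' : V * Vᵀ = 1 := mul_eq_one_comm.mp hVV
  have hspec : M * Mᵀ = V * diagonal hA.eigenvalues * Vᵀ := by
    have := hA.spectral_theorem
    rw [Unitary.conjStarAlgAut_apply] at this
    have h2 : M * Mᵀ = M * Mᴴ := by rw [conjTranspose_eq_transpose_of_trivial]
    have h3 : Vᵀ = star V := by
      rw [Matrix.star_eq_conjTranspose, conjTranspose_eq_transpose_of_trivial]
    rw [h2, h3]
    exact this
  -- B = Mᵀ V, BᵀB = D²
  set B := Mᵀ * V with hB
  have hBB : Bᵀ * B = diagonal hA.eigenvalues := by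
    calc Bᵀ * B = Vᵀ * (M * Mᵀ) * V := by
          rw [hB, transpose_mul, transpose_transpose]; simp only [Matrix.mul_assoc]
      _ = (Vᵀ * V) * diagonal hA.eigenvalues * (Vᵀ * V) := by
          rw [hspec]; simp only [Matrix.mul_assoc]
      _ = _ := by rw [hVV]; simp
  have hBij : ∀ i j, ∑ k, B k i * B k j = if i = j then hA.eigenvalues i else 0 := by
    intro i j
    have := congrFun (congrFun hBB i) j
    rw [Matrix.mul_apply, diagonal_apply] at this
    exact this
  let w : Fin r → EuclideanSpace ℝ (Fin r) := fun i => WithLp.toLp 2 (fun k => (d i)⁻¹ * B k i)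
  let s : Set (Fin r) := {i | d i ≠ 0}
  have hw : Orthonormal ℝ (s.domRestrict w) := by
    rw [orthonormal_iff_ite]
    rintro ⟨i, hi⟩ ⟨j, hj⟩
    have e : inner ℝ (w i) (w j) = (d i)⁻¹ * (d j)⁻¹ * ∑ k, B k i * B k j := by
      simp only [w, PiLp.inner_apply, Finset.mul_sum]
      apply Finset.sum_congr rfl
      intro k _
      simp
      ring
    simp only [Set.domRestrict_apply, Subtype.mk.injEq]
    rw [e, hBij]
    split_ifs with h
    · subst h
      have h2 : hA.eigenvalues i = d i * d i := (Real.mul_self_sqrt (hpos i)).symm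
      have hi' : d i ≠ 0 := hi
      rw [h2]
      field_simp
    · simp
  obtain ⟨b, hb⟩ := hw.exists_orthonormalBasis_extension_of_card_eq (by simp)
  let W : Matrix (Fin r) (Fin r) ℝ := Matrix.of fun k i => b i k
  have hWW : Wᵀ * W = 1 := by
    ext i j
    have := (orthonormal_iff_ite.mp b.orthonormal) i j
    rw [Matrix.mul_apply, Matrix.one_apply, ← this, PiLp.inner_apply]
    apply Finset.sum_congr rfl
    intro k _
    simp [W, mul_comm]
  have hBW : B = W * diagonal d := by
    ext k i
    rw [mul_diagonal]
    by_cases h : d i = 0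
    · have h2 : hA.eigenvalues i = d i * d i := (Real.mul_self_sqrt (hpos i)).symm
      have h3 := hBij i i
      rw [if_pos rfl, h2, h, mul_zero] at h3
      have := (Finset.sum_eq_zero_iff_of_nonneg
        (fun k _ => mul_self_nonneg (B k i))).mp h3 k (Finset.mem_univ _)
      rw [h, mul_zero]
      exact mul_self_eq_zero.mp this
    · have := hb i h
      simp only [W, Matrix.of_apply, this, w]
      field_simp
  refine ⟨V, W, d, hVV, hWW, fun i => Real.sqrt_nonneg _, ?_, aux_nuc M⟩
  have h4 : Mᵀ = W * diagonal d * Vᵀ := by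
    rw [← hBW, hB, Matrix.mul_assoc, hVV', Matrix.mul_one]
  have := congrArg transpose h4
  simpa [transpose_mul, Matrix.mul_assoc] using this

theorem aux_entry {m r : ℕ} {P : Matrix (Fin m) (Fin r) ℝ} (h : Pᵀ * P = 1) (i : Fin m)
    (j : Fin r) : P i j ^ 2 ≤ 1 := by
  have h1 := congrFun (congrFun h j) j
  rw [Matrix.mul_apply, Matrix.one_apply_eq] at h1
  rw [← h1]
  have := Finset.single_le_sum (f := fun k => P k j ^ 2) (fun k _ => sq_nonneg _)
    (Finset.mem_univ i)
  simpa [sq] using this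

theorem aux_tr {r : ℕ} (V W Q : Matrix (Fin r) (Fin r) ℝ) (d : Fin r → ℝ) :
    trace (Qᵀ * (V * diagonal d * Wᵀ)) = ∑ i, (Wᵀ * Qᵀ * V) i i * d i := by
  have : trace (Qᵀ * (V * diagonal d * Wᵀ)) = trace (Wᵀ * Qᵀ * V * diagonal d) := by
    rw [← Matrix.mul_assoc, trace_mul_comm]
    simp only [Matrix.mul_assoc]
  rw [this]
  simp [trace, mul_diagonal]

theorem aux_orth {r : ℕ} {V W Q : Matrix (Fin r) (Fin r) ℝ} (hV : Vᵀ * V = 1)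
    (hW : Wᵀ * W = 1) (hQ : Qᵀ * Q = 1) :
    (Wᵀ * Qᵀ * V)ᵀ * (Wᵀ * Qᵀ * V) = 1 := by
  have hW' := mul_eq_one_comm.mp hW
  have hQ' := mul_eq_one_comm.mp hQ
  calc (Wᵀ * Qᵀ * V)ᵀ * (Wᵀ * Qᵀ * V) = Vᵀ * (Q * (W * Wᵀ) * Qᵀ) * V := by
        simp [transpose_mul, Matrix.mul_assoc]
    _ = 1 := by rw [hW', Matrix.mul_one, hQ', Matrix.mul_one, hV]

theorem aux_le {r : ℕ} (M Q : Matrix (Fin r) (Fin r) ℝ) (hQ : Qᵀ * Q = 1) :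
    trace (Qᵀ * M) ≤ nuclearNorm M := by
  obtain ⟨V, W, d, hV, hW, hd, hM, hn⟩ := aux_svd M
  rw [hn, hM, aux_tr]
  apply Finset.sum_le_sum
  intro i _
  have := aux_entry (aux_orth hV hW hQ) i i
  have h1 : (Wᵀ * Qᵀ * V) i i ≤ 1 := by nlinarith
  nlinarith [hd i]

theorem aux_ex {r : ℕ} (M : Matrix (Fin r) (Fin r) ℝ) :
    ∃ Q : Matrix (Fin r) (Fin r) ℝ, Qᵀ * Q = 1 ∧ trace (Qᵀ * M) = nuclearNorm M := by
  obtain ⟨V, W, d, hV, hW, hd, hM, hn⟩ := aux_svd M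
  have hW' := mul_eq_one_comm.mp hW
  refine ⟨V * Wᵀ, ?_, ?_⟩
  · rw [transpose_mul, transpose_transpose, Matrix.mul_assoc, ← Matrix.mul_assoc Vᵀ, hV,
      Matrix.one_mul, hW']
  · rw [hn]
    conv_lhs => rw [hM]
    rw [aux_tr]
    have : Wᵀ * (V * Wᵀ)ᵀ * V = 1 := by
      rw [transpose_mul, transpose_transpose, ← Matrix.mul_assoc, hW, Matrix.one_mul, hV]
    rw [this]
    simp

theorem aux_uniq {r : ℕ} (M : Matrix (Fin r) (Fin r) ℝ) (hdet : M.det ≠ 0) :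
    ∃ Q₀ : Matrix (Fin r) (Fin r) ℝ, ∀ Q : Matrix (Fin r) (Fin r) ℝ, Qᵀ * Q = 1 →
      trace (Qᵀ * M) = nuclearNorm M → Q = Q₀ := by
  obtain ⟨V, W, d, hV, hW, hd, hM, hn⟩ := aux_svd M
  refine ⟨V * Wᵀ, ?_⟩
  intro Q hQ hq
  have hW' := mul_eq_one_comm.mp hW
  have hV' := mul_eq_one_comm.mp hV
  have hQ' := mul_eq_one_comm.mp hQ
  have hdpos : ∀ i, 0 < d i := by
    intro i
    apply lt_of_le_of_ne (hd i)
    intro h0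
    apply hdet
    rw [hM, det_mul, det_mul, det_diagonal, Finset.prod_eq_zero (Finset.mem_univ i) h0.symm]
    simp
  have hP := aux_orth hV hW hQ
  set P := Wᵀ * Qᵀ * V with hPdef
  have hPle : ∀ i, P i i ≤ 1 := fun i => by
    have := aux_entry hP i i
    nlinarith
  have hsum : ∑ i, P i i * d i = ∑ i, d i := by
    rw [← hn, ← hq, hPdef, ← aux_tr, ← hM]
  have h1 : ∀ i, P i i = 1 := by
    intro i
    have := (Finset.sum_eq_sum_iff_of_le
      (fun i _ => (by nlinarith [hPle i, hd i] : P i i * d i ≤ d i))).mp hsum i (Finset.mem_univ i)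
    have h2 := hdpos i
    exact mul_right_cancel₀ h2.ne' (by rw [this, one_mul])
  have hP1 : P = 1 := by
    ext i j
    have hc := congrFun (congrFun hP j) j
    rw [Matrix.mul_apply, Matrix.one_apply_eq,
      ← Finset.add_sum_erase _ _ (Finset.mem_univ j)] at hc
    simp only [transpose_apply, h1, mul_one, add_eq_left] at hc
    by_cases hij : i = j
    · subst hij; rw [h1, Matrix.one_apply_eq]
    · rw [Matrix.one_apply_ne hij]
      have := (Finset.sum_eq_zero_iff_of_nonneg
        (fun k _ => mul_self_nonneg (P k j))).mp hc i (by simp [hij])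
      exact mul_self_eq_zero.mp this
  have h5 : W * P * Vᵀ = Qᵀ := by
    calc W * P * Vᵀ = (W * Wᵀ) * Qᵀ * (V * Vᵀ) := by
          rw [hPdef]; simp only [Matrix.mul_assoc]
      _ = Qᵀ := by rw [hW', hV', Matrix.one_mul, Matrix.mul_one]
  rw [hP1, Matrix.mul_one] at h5
  have := congrArg transpose h5
  simpa [transpose_mul] using this.symm

theorem aux_froSq {ι κ : Type*} [Fintype ι] [Fintype κ] (M : Matrix ι κ ℝ) :
    froSq M = trace (Mᵀ * M) := by
  unfold froSq
  rw [Finset.sum_comm]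
  simp [trace, Matrix.mul_apply, sq]

theorem aux_cont {ι κ : Type*} [Fintype ι] [Fintype κ] :
    Continuous (fun M : Matrix ι κ ℝ => froSq M) := by
  unfold froSq
  refine continuous_finsetSum _ fun i _ => continuous_finsetSum _ fun j _ => ?_
  exact (continuous_id.matrix_elem i j).pow 2

theorem aux_compact (m r : ℕ) : IsCompact (Stiefel m r) := by
  have hc : IsCompact (Set.univ.pi fun _ : Fin m => Set.univ.pi fun _ : Fin r =>
      Set.Icc (-1 : ℝ) 1) :=
    isCompact_univ_pi fun _ => isCompact_univ_pi fun _ => isCompact_Icc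
  refine IsCompact.of_isClosed_subset hc ?_ ?_
  · exact isClosed_eq (by fun_prop) continuous_const
  · intro Z hZ i _ j _
    have := aux_entry hZ i j
    exact ⟨by nlinarith, by nlinarith⟩

theorem aux_dist {m r : ℕ} {X Z : Matrix (Fin m) (Fin r) ℝ} (hX : X ∈ Stiefel m r)
    (hZ : Z ∈ Stiefel m r) : froSq (Z - X) = 2 * r - 2 * trace (Zᵀ * X) := by
  have hX' : Xᵀ * X = 1 := hX
  have hZ' : Zᵀ * Z = 1 := hZ
  have h : trace (Xᵀ * Z) = trace (Zᵀ * X) := by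
    rw [← trace_transpose, transpose_mul, transpose_transpose]
  rw [aux_froSq, transpose_sub, Matrix.sub_mul, Matrix.mul_sub, Matrix.mul_sub, hX', hZ']
  simp only [trace_sub, h, trace_one, Fintype.card_fin]
  ring

theorem aux_right {m p r : ℕ} {Y : Matrix (Fin m) (Fin p) ℝ} {Z : Matrix (Fin m) (Fin r) ℝ}
    {Q : Matrix (Fin r) (Fin r) ℝ} (hZ : Z ∈ HSet Y r) (hQ : Qᵀ * Q = 1) : Z * Q ∈ HSet Y r := by
  have hQ' := mul_eq_one_comm.mp hQ
  have hZ' : Zᵀ * Z = 1 := hZ.1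
  refine ⟨?_, ?_⟩
  · change (Z * Q)ᵀ * (Z * Q) = 1
    rw [transpose_mul, Matrix.mul_assoc, ← Matrix.mul_assoc Zᵀ, hZ', Matrix.one_mul, hQ]
  · have : froSq ((Z * Q)ᵀ * Y) = froSq (Zᵀ * Y) := by
      rw [aux_froSq, aux_froSq]
      congr 1
      calc ((Z * Q)ᵀ * Y)ᵀ * ((Z * Q)ᵀ * Y) = Yᵀ * (Z * ((Q * Qᵀ) * (Zᵀ * Y))) := by
            simp [transpose_mul, Matrix.mul_assoc]
        _ = _ := by rw [hQ']; simp [transpose_mul, Matrix.mul_assoc]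
    rw [this]
    exact hZ.2

theorem aux_exists {m p r : ℕ} (hrm : r ≤ m) (Y : Matrix (Fin m) (Fin p) ℝ)
    (X : Matrix (Fin m) (Fin r) ℝ) : ∃ Z, IsProj Y X Z := by
  have hne : (Stiefel m r).Nonempty := by
    refine ⟨Matrix.of fun i j => if i = Fin.castLE hrm j then 1 else 0, ?_⟩
    change _ = _
    ext i j
    simp [Matrix.mul_apply, Matrix.one_apply, eq_comm]
  have hf : Continuous fun Z : Matrix (Fin m) (Fin r) ℝ => froSq (Zᵀ * Y) :=
    aux_cont.comp (by fun_prop)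
  have hg : Continuous fun Z : Matrix (Fin m) (Fin r) ℝ => froSq (Z - X) :=
    aux_cont.comp (by fun_prop)
  obtain ⟨Z, hZ, hmax⟩ := (aux_compact m r).exists_isMaxOn hne hf.continuousOn
  have hHne : (HSet Y r).Nonempty := ⟨Z, hZ, fun W hW => hmax hW⟩
  have hHc : IsCompact (HSet Y r) := by
    have : HSet Y r = Stiefel m r ∩ {Z' | froSq (Zᵀ * Y) ≤ froSq (Z'ᵀ * Y)} := by
      ext Z'
      exact ⟨fun h => ⟨h.1, h.2 Z hZ⟩, fun h => ⟨h.1, fun W hW => le_trans (hmax hW) h.2⟩⟩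
    rw [this]
    exact (aux_compact m r).inter_right (isClosed_le continuous_const hf)
  obtain ⟨Z', hZ', hmin⟩ := hHc.exists_isMinOn hHne hg.continuousOn
  exact ⟨Z', hZ', fun W hW => hmin hW⟩

theorem aux_max {m p r : ℕ} {Y : Matrix (Fin m) (Fin p) ℝ}
    {X Z : Matrix (Fin m) (Fin r) ℝ} (hX : X ∈ Stiefel m r) (hZ : IsProj Y X Z) :
    NucMax Y X Z ∧ trace (Zᵀ * X) = nuclearNorm (Zᵀ * X) := by
  have key : ∀ V ∈ HSet Y r, nuclearNorm (Vᵀ * X) ≤ trace (Zᵀ * X) := by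
    intro V hV
    obtain ⟨Q, hQ, hq⟩ := aux_ex (Vᵀ * X)
    have h := hZ.2 _ (aux_right hV hQ)
    rw [aux_dist hX hZ.1.1, aux_dist hX (aux_right hV hQ).1, transpose_mul,
      Matrix.mul_assoc, hq] at h
    linarith
  have h1 : trace (Zᵀ * X) ≤ nuclearNorm (Zᵀ * X) := by
    have := aux_le (Zᵀ * X) 1 (by simp)
    simpa using this
  exact ⟨⟨hZ.1, fun V hV => (key V hV).trans h1⟩, le_antisymm h1 (key Z hZ.1)⟩

/-- If `X ∈ O_{m×r}` satisfies the uniqueness conditions for `(Y,r)`,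
then the problem of minimizing `‖Z − X‖_F²` over `H_{Y,r}` has a unique solution. -/
theorem stmt2 {m p r : ℕ} (hr1 : 1 ≤ r) (hrm : r ≤ m)
    (Y : Matrix (Fin m) (Fin p) ℝ)
    (X : Matrix (Fin m) (Fin r) ℝ) (hX : X ∈ Stiefel m r)
    (hU : UniqCond Y r X) :
    ∃! Z : Matrix (Fin m) (Fin r) ℝ, IsProj Y X Z := by
  obtain ⟨Z, hZ⟩ := aux_exists hrm Y X
  refine ⟨Z, hZ, ?_⟩
  intro T hT
  obtain ⟨hZm, hZt⟩ := aux_max hX hZ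
  obtain ⟨hTm, hTt⟩ := aux_max hX hT
  have hproj := hU.2 T Z hTm hZm
  have hZZ : Zᵀ * Z = 1 := hZ.1.1
  have hTT : Tᵀ * T = 1 := hT.1.1
  have hTQ : T = Z * (Zᵀ * T) := by
    rw [← Matrix.mul_assoc, ← hproj, Matrix.mul_assoc, hTT, Matrix.mul_one]
  have hQ : (Zᵀ * T)ᵀ * (Zᵀ * T) = 1 := by
    rw [transpose_mul, transpose_transpose, Matrix.mul_assoc, ← hTQ, hTT]
  have hnn : nuclearNorm (Tᵀ * X) = nuclearNorm (Zᵀ * X) :=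
    le_antisymm (hZm.2 T hT.1) (hTm.2 Z hZ.1)
  obtain ⟨Q₀, hQ₀⟩ := aux_uniq (Zᵀ * X) (hU.1 Z hZm)
  have e1 : (1 : Matrix (Fin r) (Fin r) ℝ) = Q₀ := hQ₀ 1 (by simp) (by simpa using hZt)
  have e2 : Zᵀ * T = Q₀ := by
    apply hQ₀ _ hQ
    rw [← Matrix.mul_assoc, ← transpose_mul, ← hTQ, hTt, hnn]
  rw [hTQ, e2, ← e1, Matrix.mul_one]
end

section
/- Let Y ∈ ℝ^{m×p}, 1 ≤ r ≤ m, and U ∈ H_{Y,r}. Then there exists δ > 0 such that for every X ∈ O_{m×r} with ‖X − U‖_F < δ, the problem of minimizing ‖Z − X‖_F² over Z ∈ H_{Y,r} has a unique solution. -/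
open Matrix BigOperators Filter

section helpers

lemma froSq_eq_trace {m r : ℕ} (M : Matrix (Fin m) (Fin r) ℝ) :
    froSq M = trace (Mᵀ * M) := by
  unfold froSq
  rw [Finset.sum_comm]
  simp only [trace, diag, mul_apply, transpose_apply, sq]

lemma froSq_nonneg {m r : ℕ} (M : Matrix (Fin m) (Fin r) ℝ) : 0 ≤ froSq M :=
  Finset.sum_nonneg fun _ _ => Finset.sum_nonneg fun _ _ => sq_nonneg _

lemma froSq_eq_zero {m r : ℕ} {M : Matrix (Fin m) (Fin r) ℝ} (h : froSq M = 0) : M = 0 := by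
  unfold froSq at h
  ext i j
  have h1 := (Finset.sum_eq_zero_iff_of_nonneg
    (fun i _ => Finset.sum_nonneg fun j _ => sq_nonneg (M i j))).1 h i (Finset.mem_univ _)
  have h2 := (Finset.sum_eq_zero_iff_of_nonneg
    (fun j _ => sq_nonneg (M i j))).1 h1 j (Finset.mem_univ _)
  simpa using h2

open scoped Matrix.Norms.Frobenius in
lemma froSq_eq_norm {m r : ℕ} (M : Matrix (Fin m) (Fin r) ℝ) : froSq M = ‖M‖ ^ 2 := by
  rw [frobenius_norm_def, ← Real.sqrt_eq_rpow, Real.sq_sqrt]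
  · simp [froSq]
  · positivity

open scoped Matrix.Norms.Frobenius in
lemma trace_le_norm {m r : ℕ} (M N : Matrix (Fin m) (Fin r) ℝ) :
    trace (Mᵀ * N) ≤ ‖M‖ * ‖N‖ := by
  have h1 : trace (Mᵀ * N) = ∑ x : Fin m × Fin r, M x.1 x.2 * N x.1 x.2 := by
    rw [Fintype.sum_prod_type, Finset.sum_comm]
    simp [trace, diag, mul_apply]
  have h2 : ∀ A : Matrix (Fin m) (Fin r) ℝ, ∑ x : Fin m × Fin r, (A x.1 x.2) ^ 2 = ‖A‖ ^ 2 := by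
    intro A
    rw [← froSq_eq_norm, Fintype.sum_prod_type]; rfl
  have h3 := Finset.sum_mul_sq_le_sq_mul_sq (Finset.univ : Finset (Fin m × Fin r))
    (fun x => M x.1 x.2) (fun x => N x.1 x.2)
  rw [h2, h2, ← h1, ← mul_pow] at h3
  exact le_of_sq_le_sq h3 (by positivity)
where
  le_of_sq_le_sq {a b : ℝ} (h : a ^ 2 ≤ b ^ 2) (hb : 0 ≤ b) : a ≤ b := 
    (abs_le.1 (abs_le_of_sq_le_sq h hb)).2

/-- One-parameter orthogonal groups. -/
lemma exists_curve {n : ℕ} (S : Matrix (Fin n) (Fin n) ℝ) (hS : Sᵀ = -S) :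
    ∃ g : ℝ → Matrix (Fin n) (Fin n) ℝ, g 0 = 1 ∧ (∀ t, (g t)ᵀ * g t = 1) ∧
      (∀ t B, S * B = B * S → g t * B = B * g t) ∧
      (∀ M, HasDerivAt (fun t => trace (M * g t)) (trace (M * S)) 0) ∧
      (∀ A P, HasDerivAt (fun t => trace (A * (g t * P * (g t)ᵀ)))
        (trace (A * (S * P - P * S))) 0) := by
  open scoped Matrix.Norms.Frobenius in
  have hd : ∀ T : Matrix (Fin n) (Fin n) ℝ,
      HasDerivAt (fun t : ℝ => NormedSpace.exp (t • T)) T 0 := fun T => by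
    have h := hasDerivAt_exp_smul_const (𝕂 := ℝ) T (0 : ℝ)
    rw [zero_smul, NormedSpace.exp_zero, one_mul] at h
    exact h
  have htr : ∀ (f : ℝ → Matrix (Fin n) (Fin n) ℝ) f', HasDerivAt f f' 0 →
      HasDerivAt (fun t => trace (f t)) (trace f') 0 := fun f f' h =>
    ((Matrix.traceLinearMap (Fin n) ℝ ℝ).toContinuousLinearMap.hasFDerivAt).comp_hasDerivAt 0 h
  have hT : ∀ t : ℝ, (NormedSpace.exp (t • S))ᵀ = NormedSpace.exp (t • (-S)) := by
    intro t
    rw [← Matrix.exp_transpose, transpose_smul, hS]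
  refine ⟨fun t => NormedSpace.exp (t • S), by simp, ?_, ?_, ?_, ?_⟩
  · intro t
    rw [hT, ← Matrix.exp_add_of_commute]
    · simp
    · exact (((Commute.refl S).neg_left).smul_left t).smul_right t
  · intro t B h
    exact (Commute.exp_left (Commute.smul_left (show Commute S B from h) t))
  · intro M
    exact htr _ _ ((hd S).const_mul M)
  · intro A P
    simp only [hT]
    have h := htr _ _ ((((hd S).mul_const P).mul (hd (-S))).const_mul A)
    convert h using 2
    · rfl
    rw [zero_smul, zero_smul, NormedSpace.exp_zero, mul_one, one_mul, mul_neg, sub_eq_add_neg]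

lemma HSet_act {m p r : ℕ} {Y : Matrix (Fin m) (Fin p) ℝ} {Z : Matrix (Fin m) (Fin r) ℝ}
    (hZ : Z ∈ HSet Y r) (g : Matrix (Fin m) (Fin m) ℝ) (h : Matrix (Fin r) (Fin r) ℝ)
    (hg : gᵀ * g = 1) (hc : g * (Y * Yᵀ) = (Y * Yᵀ) * g) (hh : hᵀ * h = 1) :
    g * Z * h ∈ HSet Y r := by
  have hh' : h * hᵀ = 1 := mul_eq_one_comm.1 hh
  have hZ1 : Zᵀ * Z = 1 := hZ.1
  refine ⟨?_, fun W hW => (hZ.2 W hW).trans (le_of_eq ?_)⟩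
  · show (g * Z * h)ᵀ * (g * Z * h) = 1
    calc (g * Z * h)ᵀ * (g * Z * h) = hᵀ * (Zᵀ * (gᵀ * g) * Z) * h := by
          simp only [transpose_mul, Matrix.mul_assoc]
      _ = 1 := by rw [hg, Matrix.mul_one, hZ1, Matrix.mul_one, hh]
  · rw [froSq_eq_trace, froSq_eq_trace]
    have e1 : ((g * Z * h)ᵀ * Y)ᵀ * ((g * Z * h)ᵀ * Y) = (Yᵀ * g) * (Z * (Zᵀ * (gᵀ * Y))) := by
      calc _ = Yᵀ * g * Z * (h * hᵀ) * (Zᵀ * (gᵀ * Y)) := by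
            simp only [transpose_mul, transpose_transpose, Matrix.mul_assoc]
        _ = _ := by rw [hh', Matrix.mul_one]; simp only [Matrix.mul_assoc]
    rw [e1, trace_mul_comm (Yᵀ * g)]
    have e2 : Z * (Zᵀ * (gᵀ * Y)) * (Yᵀ * g) = Z * Zᵀ * (Y * Yᵀ) := by
      calc _ = Z * Zᵀ * gᵀ * ((Y * Yᵀ) * g) := by simp only [Matrix.mul_assoc]
        _ = Z * Zᵀ * (gᵀ * g) * (Y * Yᵀ) := by rw [← hc]; simp only [Matrix.mul_assoc]
        _ = _ := by rw [hg, Matrix.mul_one]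
    rw [e2, show (Zᵀ * Y)ᵀ * (Zᵀ * Y) = Yᵀ * (Z * (Zᵀ * Y)) by
      simp only [transpose_mul, transpose_transpose, Matrix.mul_assoc], trace_mul_comm]
    simp only [Matrix.mul_assoc]

lemma HSet_commute {m p r : ℕ} {Y : Matrix (Fin m) (Fin p) ℝ} {Z : Matrix (Fin m) (Fin r) ℝ}
    (hZ : Z ∈ HSet Y r) : (Z * Zᵀ) * (Y * Yᵀ) = (Y * Yᵀ) * (Z * Zᵀ) := by
  set P := Z * Zᵀ with hP
  set A := Y * Yᵀ with hA
  have hPt : Pᵀ = P := by simp [hP]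
  have hAt : Aᵀ = A := by simp [hA]
  have hZ1 : Zᵀ * Z = 1 := hZ.1
  have hS : (P * A - A * P)ᵀ = -(P * A - A * P) := by
    simp [hPt, hAt]
  obtain ⟨g, g0, gorth, -, -, gd⟩ := exists_curve _ hS
  have hval : ∀ g : Matrix (Fin m) (Fin m) ℝ, froSq ((g * Z)ᵀ * Y) = trace (A * (g * P * gᵀ)) := by
    intro g
    rw [froSq_eq_trace, show ((g * Z)ᵀ * Y)ᵀ * ((g * Z)ᵀ * Y) = Yᵀ * (g * Z * Zᵀ * gᵀ * Y) by
      simp only [transpose_mul, transpose_transpose, Matrix.mul_assoc], trace_mul_comm,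
      Matrix.mul_assoc, trace_mul_comm]
    simp only [hP, hA, Matrix.mul_assoc]
  have hmax : IsLocalMax (fun t => trace (A * (g t * P * (g t)ᵀ))) 0 := by
    refine Filter.Eventually.of_forall fun t => ?_
    show trace (A * (g t * P * (g t)ᵀ)) ≤ trace (A * (g 0 * P * (g 0)ᵀ))
    rw [← hval, ← hval, g0, Matrix.one_mul]
    refine hZ.2 _ ?_
    show (g t * Z)ᵀ * (g t * Z) = 1
    rw [transpose_mul, Matrix.mul_assoc, ← Matrix.mul_assoc (g t)ᵀ, gorth, Matrix.one_mul, hZ1]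
  have h0 := hmax.hasDerivAt_eq_zero (gd A P)
  have h1 : froSq (P * A - A * P) = 0 := by
    rw [froSq_eq_trace, hS]
    set S := P * A - A * P with hSd
    have : trace (A * (S * P - P * S)) = trace (S * S) := by
      have e1 : trace (A * (S * P)) = trace (S * (P * A)) := by
        rw [trace_mul_comm, Matrix.mul_assoc]
      have e2 : trace (A * (P * S)) = trace (S * (A * P)) := by
        rw [← Matrix.mul_assoc, trace_mul_comm]
      conv_rhs => rw [hSd, ← hSd]
      rw [Matrix.mul_sub, trace_sub, e1, e2, ← trace_sub, ← Matrix.mul_sub]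
    rw [Matrix.neg_mul, trace_neg, ← this, h0, neg_zero]
  exact sub_eq_zero.1 (froSq_eq_zero h1)

lemma froSq_sub_stiefel {m r : ℕ} {W X : Matrix (Fin m) (Fin r) ℝ} :
    froSq (W - X) = trace (Wᵀ * W) + trace (Xᵀ * X) - 2 * trace (Xᵀ * W) := by
  have : trace (Wᵀ * X) = trace (Xᵀ * W) := by
    rw [← trace_transpose, transpose_mul, transpose_transpose]
  rw [froSq_eq_trace, transpose_sub, Matrix.sub_mul, Matrix.mul_sub, Matrix.mul_sub]
  simp only [trace_sub, this]
  ring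

/-- First order conditions at a projection. -/
lemma proj_first_order {m p r : ℕ} {Y : Matrix (Fin m) (Fin p) ℝ}
    {X Z : Matrix (Fin m) (Fin r) ℝ} (hZ : IsProj Y X Z) :
    (∀ S : Matrix (Fin m) (Fin m) ℝ, Sᵀ = -S → S * (Y * Yᵀ) = (Y * Yᵀ) * S →
      trace (Xᵀ * (S * Z)) = 0) ∧
    (∀ K : Matrix (Fin r) (Fin r) ℝ, Kᵀ = -K → trace (Xᵀ * (Z * K)) = 0) := by
  have key : ∀ W ∈ HSet Y r, trace (Xᵀ * W) ≤ trace (Xᵀ * Z) := by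
    intro W hW
    have h := hZ.2 W hW
    rw [froSq_sub_stiefel, froSq_sub_stiefel, show Wᵀ * W = 1 from hW.1,
      show Zᵀ * Z = 1 from hZ.1.1] at h
    linarith
  constructor
  · intro S hS hc
    obtain ⟨g, g0, gorth, gc, gd, -⟩ := exists_curve S hS
    have e : ∀ B : Matrix (Fin m) (Fin m) ℝ, trace (Z * Xᵀ * B) = trace (Xᵀ * (B * Z)) := by
      intro B
      rw [Matrix.mul_assoc, trace_mul_comm, Matrix.mul_assoc]
    have hmax : IsLocalMax (fun t => trace (Z * Xᵀ * g t)) 0 := by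
      refine Filter.Eventually.of_forall fun t => ?_
      show trace (Z * Xᵀ * g t) ≤ trace (Z * Xᵀ * g 0)
      rw [e, e, g0, Matrix.one_mul]
      have := HSet_act hZ.1 (g t) 1 (gorth t) (gc t _ hc) (by simp)
      rw [Matrix.mul_one] at this
      exact key _ this
    rw [← e]
    exact hmax.hasDerivAt_eq_zero (gd _)
  · intro K hK
    obtain ⟨g, g0, gorth, gc, gd, -⟩ := exists_curve K hK
    have hmax : IsLocalMax (fun t => trace (Xᵀ * Z * g t)) 0 := by
      refine Filter.Eventually.of_forall fun t => ?_
      show trace (Xᵀ * Z * g t) ≤ trace (Xᵀ * Z * g 0)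
      rw [g0, Matrix.mul_one, Matrix.mul_assoc]
      have := HSet_act hZ.1 1 (g t) (by simp) (by simp) (gorth t)
      rw [Matrix.one_mul] at this
      exact key _ this
    rw [← Matrix.mul_assoc]
    exact hmax.hasDerivAt_eq_zero (gd _)

lemma trace_skew {n : ℕ} {K : Matrix (Fin n) (Fin n) ℝ} (hK : Kᵀ = -K) : trace K = 0 := by
  have := trace_transpose K
  rw [hK, trace_neg] at this
  linarith

open scoped Matrix.Norms.Frobenius in
lemma proj_unique {m p r : ℕ} {Y : Matrix (Fin m) (Fin p) ℝ}
    {X Z V : Matrix (Fin m) (Fin r) ℝ} (hX : X ∈ Stiefel m r) (hZ : IsProj Y X Z)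
    (hV : IsProj Y X V) (hd : 2 * ‖X - Z‖ * (3 * Real.sqrt r + Real.sqrt r ^ 3) < 1) : V = Z := by
  have hZ1 : Zᵀ * Z = 1 := hZ.1.1
  have hV1 : Vᵀ * V = 1 := hV.1.1
  obtain ⟨D, rfl⟩ : ∃ D, V = Z + D := ⟨V - Z, by simp⟩
  have hD : Zᵀ * D + Dᵀ * Z + Dᵀ * D = 0 := by
    rw [transpose_add, Matrix.add_mul, Matrix.mul_add, Matrix.mul_add, hZ1] at hV1
    have := sub_eq_zero.2 hV1
    rw [← this]; abel
  obtain ⟨f1, f2⟩ := proj_first_order hZ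
  set P := Z * Zᵀ with hP
  set P' := (Z + D) * (Z + D)ᵀ with hP'
  have hPt : Pᵀ = P := by simp [hP]
  have hPt' : P'ᵀ = P' := by rw [hP', transpose_mul, transpose_transpose]
  have hPc := HSet_commute hZ.1
  have hPc' := HSet_commute hV.1
  rw [← hP] at hPc
  rw [← hP'] at hPc'
  set S := P' * P - P * P' with hSd
  have hS : Sᵀ = -S := by simp [hSd, hPt, hPt']
  have hSc : S * (Y * Yᵀ) = (Y * Yᵀ) * S := by
    have a : Commute P (Y * Yᵀ) := hPc
    have b : Commute P' (Y * Yᵀ) := hPc'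
    exact ((b.mul_left a).sub_left (a.mul_left b)).eq
  set K := Zᵀ * D - Dᵀ * Z with hKd
  have hK : Kᵀ = -K := by simp [hKd]
  have g1 := f1 S hS hSc
  have g2 := f2 K hK
  have g3 : trace (Zᵀ * (S * Z)) = 0 := by
    apply trace_skew
    simp only [transpose_mul, transpose_transpose, hS, Matrix.mul_assoc]
    simp
  have g4 : trace (Zᵀ * (Z * K)) = 0 := by
    rw [← Matrix.mul_assoc, hZ1, Matrix.one_mul]; exact trace_skew hK
  -- the second order remainder
  set R := P * D * Dᵀ * Z - D * Dᵀ * Z - (1 / 2 : ℝ) • (Z * (Dᵀ * D)) with hR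
  have hDR : D = S * Z + (1 / 2 : ℝ) • (Z * K) + R := by
    have z1 : ∀ B : Matrix (Fin r) (Fin r) ℝ, Zᵀ * (Z * B) = B := fun B => by
      rw [← Matrix.mul_assoc, hZ1, Matrix.one_mul]
    have hDD : Dᵀ * D = -(Zᵀ * D) - Dᵀ * Z := by
      rw [eq_sub_iff_add_eq, eq_neg_iff_add_eq_zero, ← hD]; abel
    have hPZ : P * Z = Z := by rw [hP, Matrix.mul_assoc, hZ1, Matrix.mul_one]
    have hP'Z : P' * Z = Z + Z * (Dᵀ * Z) + D + D * Dᵀ * Z := by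
      rw [hP', transpose_add]
      simp only [Matrix.mul_add, Matrix.add_mul, Matrix.mul_assoc, hZ1, Matrix.mul_one]
      abel
    have hSZ : S * Z = P' * Z - P * (P' * Z) := by
      rw [hSd, Matrix.sub_mul, Matrix.mul_assoc P' P, hPZ, Matrix.mul_assoc P P']
    rw [hSZ, hP'Z, hR, hDD, hKd]
    have hPD : P * D = Z * (Zᵀ * D) := by rw [hP, Matrix.mul_assoc]
    have q : P * (Z + Z * (Dᵀ * Z) + D + D * Dᵀ * Z) =
        Z + Z * (Dᵀ * Z) + P * D + P * D * Dᵀ * Z := by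
      simp only [Matrix.mul_add, ← Matrix.mul_assoc, hPZ]
    rw [q, Matrix.mul_sub, Matrix.mul_sub, Matrix.mul_neg, ← hPD]
    module
  have hN : trace ((X - Z)ᵀ * D) = trace ((X - Z)ᵀ * R) := by
    conv_lhs => rw [hDR]
    rw [Matrix.mul_add, Matrix.mul_add, trace_add, trace_add, Matrix.mul_smul, trace_smul,
      transpose_sub, Matrix.sub_mul Xᵀ Zᵀ (S * Z), Matrix.sub_mul Xᵀ Zᵀ (Z * K), trace_sub, trace_sub, g1, g2, g3, g4]
    simp
  have hZn : ‖Z‖ = Real.sqrt r := by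
    have : ‖Z‖ ^ 2 = r := by rw [← froSq_eq_norm, froSq_eq_trace, hZ1]; simp
    rw [← this, Real.sqrt_sq (norm_nonneg _)]
  have hRn : ‖R‖ ≤ (3 * Real.sqrt r + Real.sqrt r ^ 3) * ‖D‖ ^ 2 := by
    set c := Real.sqrt r
    have c0 : 0 ≤ c := Real.sqrt_nonneg _
    have ht : ∀ {a b : ℕ} (M : Matrix (Fin a) (Fin b) ℝ), ‖Mᵀ‖ = ‖M‖ :=
      fun M => frobenius_norm_transpose M
    have r1 : ‖D * Dᵀ * Z‖ ≤ c * ‖D‖ ^ 2 := by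
      calc _ ≤ ‖D‖ * ‖Dᵀ‖ * ‖Z‖ := (frobenius_norm_mul _ _).trans
            (mul_le_mul_of_nonneg_right (frobenius_norm_mul _ _) (norm_nonneg _))
        _ = _ := by rw [ht, hZn]; ring
    have r2 : ‖P * D * Dᵀ * Z‖ ≤ c ^ 3 * ‖D‖ ^ 2 := by
      have : P * D * Dᵀ * Z = P * (D * Dᵀ * Z) := by simp only [Matrix.mul_assoc]
      have hp : ‖P‖ ≤ c * c := by
        calc _ ≤ ‖Z‖ * ‖Zᵀ‖ := frobenius_norm_mul _ _
          _ = _ := by rw [ht, hZn]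
      rw [this]
      calc _ ≤ ‖P‖ * ‖D * Dᵀ * Z‖ := frobenius_norm_mul _ _
        _ ≤ (c * c) * (c * ‖D‖ ^ 2) := by gcongr
        _ = _ := by ring
    have r3 : ‖(1 / 2 : ℝ) • (Z * (Dᵀ * D))‖ ≤ c * ‖D‖ ^ 2 := by
      have : ‖Z * (Dᵀ * D)‖ ≤ c * ‖D‖ ^ 2 := by
        calc _ ≤ ‖Z‖ * (‖Dᵀ‖ * ‖D‖) := (frobenius_norm_mul _ _).trans
              (mul_le_mul_of_nonneg_left (frobenius_norm_mul _ _) (norm_nonneg _))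
          _ = _ := by rw [ht, hZn]; ring
      rw [norm_smul]
      norm_num
      have := norm_nonneg (Z * (Dᵀ * D))
      linarith
    have s1 := norm_sub_le (P * D * Dᵀ * Z - D * Dᵀ * Z) ((1 / 2 : ℝ) • (Z * (Dᵀ * D)))
    have s2 := norm_sub_le (P * D * Dᵀ * Z) (D * Dᵀ * Z)
    rw [← hR] at s1
    nlinarith [mul_nonneg c0 (sq_nonneg ‖D‖)]
  have hle : ‖D‖ ^ 2 ≤ 2 * trace ((X - Z)ᵀ * D) := by
    have h := hV.2 Z hZ.1
    have e : Z + D - X = D - (X - Z) := by abel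
    have e2 : froSq (Z - X) = froSq (X - Z) := by
      rw [froSq_eq_norm, froSq_eq_norm, norm_sub_rev]
    rw [e, e2, froSq_sub_stiefel, froSq_eq_trace (X - Z), ← froSq_eq_trace D, froSq_eq_norm] at h
    linarith
  have hcs := trace_le_norm (X - Z) R
  have h5 : ‖D‖ ^ 2 ≤ (2 * ‖X - Z‖ * (3 * Real.sqrt r + Real.sqrt r ^ 3)) * ‖D‖ ^ 2 := by
    have := mul_le_mul_of_nonneg_left hRn (norm_nonneg (X - Z))
    rw [hN] at hle
    nlinarith
  have h6 : ‖D‖ ^ 2 = 0 := by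
    by_contra hne
    have : 0 < ‖D‖ ^ 2 := lt_of_le_of_ne (sq_nonneg _) (Ne.symm hne)
    nlinarith
  rw [← froSq_eq_norm] at h6
  rw [froSq_eq_zero h6, add_zero]

open scoped Matrix.Norms.Frobenius in
lemma proj_exists {m p r : ℕ} {Y : Matrix (Fin m) (Fin p) ℝ} {U : Matrix (Fin m) (Fin r) ℝ}
    (hU : U ∈ HSet Y r) (X : Matrix (Fin m) (Fin r) ℝ) : ∃ Z, IsProj Y X Z := by
  have hfc : ∀ q : ℕ, Continuous (fun M : Matrix (Fin m) (Fin q) ℝ => froSq M) := by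
    intro q; simp only [froSq_eq_norm]; fun_prop
  have hfc' : Continuous (fun M : Matrix (Fin r) (Fin p) ℝ => froSq M) := by
    simp only [froSq_eq_norm]; fun_prop
  have hcl : IsClosed (HSet Y r) := by
    have : HSet Y r = {Z | Zᵀ * Z = 1} ∩
        ⋂ W ∈ Stiefel m r, {Z | froSq (Wᵀ * Y) ≤ froSq (Zᵀ * Y)} := by
      ext Z; simp [HSet, Stiefel]
    rw [this]
    refine IsClosed.inter (isClosed_eq (by fun_prop) continuous_const) ?_
    refine isClosed_biInter fun W _ => isClosed_le continuous_const (hfc'.comp (by fun_prop))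
  have hbd : Bornology.IsBounded (HSet Y r) := by
    refine (Metric.isBounded_closedBall (x := (0 : Matrix (Fin m) (Fin r) ℝ))
      (r := Real.sqrt r)).subset fun Z hZ => ?_
    rw [mem_closedBall_zero_iff]
    have : ‖Z‖ ^ 2 = r := by
      rw [← froSq_eq_norm, froSq_eq_trace, show Zᵀ * Z = 1 from hZ.1]; simp
    rw [← this, Real.sqrt_sq (norm_nonneg _)]
  have : ProperSpace (Matrix (Fin m) (Fin r) ℝ) := FiniteDimensional.proper ℝ _
  have hco : IsCompact (HSet Y r) := Metric.isCompact_of_isClosed_isBounded hcl hbd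
  obtain ⟨Z, hZ, hmin⟩ := hco.exists_isMinOn ⟨U, hU⟩
    (f := fun Z => froSq (Z - X)) (((hfc r).comp (by fun_prop)).continuousOn)
  exact ⟨Z, hZ, fun W hW => hmin hW⟩

end helpers

/-- For every `U ∈ H_{Y,r}` there is `δ > 0` such that for every
`X ∈ O_{m×r}` with `‖X − U‖_F < δ`, the problem of minimizing `‖Z − X‖_F²`
over `H_{Y,r}` has a unique solution. -/
theorem stmt3 {m p r : ℕ} (hr1 : 1 ≤ r) (hrm : r ≤ m)
    (Y : Matrix (Fin m) (Fin p) ℝ)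
    (U : Matrix (Fin m) (Fin r) ℝ) (hU : U ∈ HSet Y r) :
    ∃ δ > (0 : ℝ), ∀ X ∈ Stiefel m r, fro (X - U) < δ →
      ∃! Z : Matrix (Fin m) (Fin r) ℝ, IsProj Y X Z := by
  open scoped Matrix.Norms.Frobenius in
  have hC : 0 ≤ 3 * Real.sqrt r + Real.sqrt r ^ 3 := by positivity
  refine ⟨1 / (2 * (3 * Real.sqrt r + Real.sqrt r ^ 3) + 1), by positivity, fun X hX hXU => ?_⟩
  obtain ⟨Z, hZ⟩ := proj_exists hU X
  refine ⟨Z, hZ, fun V hV => proj_unique hX hZ hV ?_⟩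
  have h1 : ‖X - Z‖ ≤ fro (X - U) := by
    unfold fro
    apply Real.le_sqrt_of_sq_le
    have := hZ.2 U hU
    rw [froSq_eq_norm, froSq_eq_norm, norm_sub_rev, norm_sub_rev U] at this
    rwa [froSq_eq_norm]
  have h2 := lt_of_le_of_lt h1 hXU
  rw [lt_div_iff₀ (by positivity)] at h2
  nlinarith [norm_nonneg (X - Z)]
end

section
/- Let G ∈ ℝ^{m×p} and 1 ≤ r ≤ m. If A ∈ O_{m×r} maximizes ‖BᵀG‖_F² over B ∈ O_{m×r}, then GGᵀA = AAᵀGGᵀA. -/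
open Matrix BigOperators Filter

lemma aux_real (n P Q : ℝ) (hn : 0 ≤ n)
    (h : ∀ c s : ℝ, c ^ 2 + s ^ 2 * n = 1 → c ^ 2 * P + 2 * (c * s) * n + s ^ 2 * Q ≤ P) :
    n = 0 := by
  by_contra hne
  have hpos : 0 < n := lt_of_le_of_ne hn (Ne.symm hne)
  have key : ∀ t : ℝ, 0 < t → n * (1 - t ^ 2 * n) ≤ t * (n * P - Q) := by
    intro t ht
    have hd : 0 < 1 + t ^ 2 * n := by positivity
    have h1 := h ((1 - t ^ 2 * n) / (1 + t ^ 2 * n)) (2 * t / (1 + t ^ 2 * n))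
      (by field_simp; ring)
    have e : (((1 - t ^ 2 * n) / (1 + t ^ 2 * n)) ^ 2 * P
        + 2 * ((1 - t ^ 2 * n) / (1 + t ^ 2 * n) * (2 * t / (1 + t ^ 2 * n))) * n
        + (2 * t / (1 + t ^ 2 * n)) ^ 2 * Q) - P
        = 4 * t / (1 + t ^ 2 * n) ^ 2 * (n * (1 - t ^ 2 * n) - t * (n * P - Q)) := by
      field_simp
      ring
    have hk : 0 < 4 * t / (1 + t ^ 2 * n) ^ 2 := by positivity
    by_contra hlt
    have := mul_pos hk (sub_pos.2 (not_le.1 hlt))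
    linarith
  have hD : 0 < |n * P - Q| + n ^ 2 + n + 1 := by positivity
  have := key (n / (2 * (|n * P - Q| + n ^ 2 + n + 1))) (by positivity)
  set D := |n * P - Q| + n ^ 2 + n + 1 with hDdef
  have ht : 0 < n / (2 * D) := by positivity
  have h2 : n / (2 * D) * (n * P - Q) ≤ n / (2 * D) * D := by
    apply mul_le_mul_of_nonneg_left _ ht.le
    have := le_abs_self (n * P - Q)
    nlinarith [sq_nonneg n]
  have h3 : n / (2 * D) * D = n / 2 := by field_simp
  have h4 : n / (2 * D) < 1 / 2 := by
    rw [div_lt_div_iff₀ (by positivity) (by norm_num)]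
    nlinarith [abs_nonneg (n * P - Q), sq_nonneg n]
  have h5 : n / (2 * D) * n < 1 / 2 := by
    rw [div_mul_eq_mul_div, div_lt_div_iff₀ (by positivity) (by norm_num)]
    nlinarith [abs_nonneg (n * P - Q), sq_nonneg n]
  have h6 : (n / (2 * D)) ^ 2 * n < 1 / 2 := by
    have : 0 < n / (2 * D) * n := by positivity
    nlinarith
  nlinarith

lemma froSq_rows {m p r : ℕ} (B : Matrix (Fin m) (Fin r) ℝ) (G : Matrix (Fin m) (Fin p) ℝ) :
    froSq (Bᵀ * G) = ∑ i, (B.col i ᵥ* G) ⬝ᵥ (B.col i ᵥ* G) := by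
  unfold froSq
  refine Finset.sum_congr rfl fun i _ => Finset.sum_congr rfl fun j _ => ?_
  rw [sq]; rfl

lemma stiefel_iff {m r : ℕ} (B : Matrix (Fin m) (Fin r) ℝ) :
    B ∈ Stiefel m r ↔ ∀ i k, B.col i ⬝ᵥ B.col k = if i = k then 1 else 0 := by
  constructor
  · intro h i k
    have := congrFun (congrFun (show Bᵀ * B = 1 from h) i) k
    rw [Matrix.one_apply] at this
    exact this
  · intro h
    show Bᵀ * B = 1
    ext i k
    rw [Matrix.one_apply]
    exact h i k

/-- If `A ∈ O_{m×r}` maximizes `‖Bᵀ G‖_F²` over `B ∈ O_{m×r}`,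
then `G Gᵀ A = A Aᵀ G Gᵀ A`. -/
theorem stmt7 {m p r : ℕ} (hr1 : 1 ≤ r) (hrm : r ≤ m)
    (G : Matrix (Fin m) (Fin p) ℝ)
    (A : Matrix (Fin m) (Fin r) ℝ) (hA : A ∈ Stiefel m r)
    (hmax : ∀ B ∈ Stiefel m r, froSq (Bᵀ * G) ≤ froSq (Aᵀ * G)) :
    G * Gᵀ * A = A * Aᵀ * (G * Gᵀ * A) := by
  have hA1 : Aᵀ * A = 1 := hA
  have hA2 := (stiefel_iff A).1 hA
  rw [← sub_eq_zero]
  set V := G * Gᵀ * A - A * Aᵀ * (G * Gᵀ * A) with hV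
  have hAV : Aᵀ * V = 0 := by
    rw [hV, Matrix.mul_sub, ← Matrix.mul_assoc Aᵀ (A * Aᵀ), ← Matrix.mul_assoc Aᵀ A, hA1,
      Matrix.one_mul, sub_self]
  have hVV : Vᵀ * (G * Gᵀ * A) = Vᵀ * V := by
    have h0 : Vᵀ * A = 0 := by
      have := congrArg Matrix.transpose hAV
      simpa using this
    conv_rhs => rw [hV, Matrix.mul_sub, ← hV, ← Matrix.mul_assoc Vᵀ (A * Aᵀ),
      ← Matrix.mul_assoc Vᵀ A, h0]
    simp
  have horth : ∀ i k, A.col i ⬝ᵥ V.col k = 0 := fun i k => congrFun (congrFun hAV i) k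
  have hcol : ∀ j, V.col j = 0 := by
    intro j
    have hgh : (A.col j ᵥ* G) ⬝ᵥ (V.col j ᵥ* G) = V.col j ⬝ᵥ V.col j := by
      have h1 : (Vᵀ * (G * Gᵀ * A)) j j = V.col j ⬝ᵥ V.col j :=
        congrFun (congrFun hVV j) j
      rw [← h1]
      have h2 : Vᵀ * (G * Gᵀ * A) = (Vᵀ * G) * (Aᵀ * G)ᵀ := by
        simp [Matrix.mul_assoc]
      rw [h2, dotProduct_comm]
      rfl
    rw [← dotProduct_self_eq_zero]
    refine aux_real _ ((A.col j ᵥ* G) ⬝ᵥ (A.col j ᵥ* G)) ((V.col j ᵥ* G) ⬝ᵥ (V.col j ᵥ* G))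
      (Finset.sum_nonneg fun i _ => mul_self_nonneg _) ?_
    intro c s hcs
    set b := c • A.col j + s • V.col j with hb
    have hBj : (A.updateCol j b).col j = b := by ext; simp [Matrix.col]
    have hBi : ∀ i, i ≠ j → (A.updateCol j b).col i = A.col i := by
      intro i hi; ext; simp [Matrix.col, Matrix.updateCol_apply, hi]
    have hAb : ∀ i, i ≠ j → A.col i ⬝ᵥ b = 0 := by
      intro i hi
      simp [hb, horth, hA2, hi]
    have hB : A.updateCol j b ∈ Stiefel m r := by
      rw [stiefel_iff]
      intro i k
      by_cases hi : i = j <;> by_cases hk : k = j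
      · subst hi; subst hk
        rw [hBj, if_pos rfl, hb]
        have h3 : V.col k ⬝ᵥ A.col k = 0 := by rw [dotProduct_comm]; exact horth _ _
        simp only [dotProduct_add, add_dotProduct, smul_dotProduct, dotProduct_smul, horth, h3,
          hA2, smul_eq_mul, if_true]
        linarith
      · subst hi
        rw [hBj, hBi k hk, dotProduct_comm, hAb k hk, if_neg (Ne.symm hk)]
      · subst hk
        rw [hBj, hBi i hi, hAb i hi, if_neg hi]
      · rw [hBi i hi, hBi k hk, hA2]
    have h := hmax _ hB
    rw [froSq_rows, froSq_rows, ← Finset.add_sum_erase _ _ (Finset.mem_univ j),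
      ← Finset.add_sum_erase Finset.univ (fun i => (A.col i ᵥ* G) ⬝ᵥ (A.col i ᵥ* G))
        (Finset.mem_univ j),
      Finset.sum_congr rfl (fun i hi => by rw [hBi i (Finset.ne_of_mem_erase hi)]), hBj] at h
    have h' := le_of_add_le_add_right h
    have hgh2 := hgh
    rw [dotProduct_comm] at hgh2
    simp only [hb, Matrix.add_vecMul, Matrix.smul_vecMul, dotProduct_add, add_dotProduct,
      smul_dotProduct, dotProduct_smul, smul_eq_mul, hgh, hgh2] at h'
    linarith
  ext i j
  exact congrFun (hcol j) i
end
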